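/- Let V = ⊕_{l=0}^{L} V_l be a finite-dimensional K-vector space and f_1,…,f_r K-linear endomorphisms of V with f_i(V_l) ⊆ ⊕_{u=l+1}^{L} V_u for all i, l, and let M be the resulting Λ-module on V in which the generator X_i acts as f_i. Then for every m ∈ {0,…,L}: the equalities dim_K(J^l M/J^{l+1} M) = dim_K V_l hold for all 0 ≤ l ≤ m if and only if, for every 0 ≤ l ≤ m, the subspace ∑ f_{i_s}∘⋯∘f_{i_1}(V_l), where the sum ranges over all nonempty compositions of the maps f_1,…,f_r, contains ⊕_{u=l+1}^{L} V_u. In particular, rad(M) = (dim_K V_0,…,dim_K V_L) if and only if for every 0 ≤ l < L the image of the subspace ∑_{i=1}^{r} f_i(V_l) in the quotient space V/(⊕_{u=l+2}^{L} V_u) has dimension equal to dim_K V_{l+1}. -/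

import Mathlib

noncomputable section

/-- The relation on the free algebra killing all products of `L+1` generators. -/
def TruncRel (K : Type*) [Field K] (r L : ℕ) :
    FreeAlgebra K (Fin r) → FreeAlgebra K (Fin r) → Prop := fun a b =>
  (∃ f : Fin (L + 1) → Fin r, a = (List.ofFn fun j => FreeAlgebra.ι K (f j)).prod) ∧ b = 0

/-- The local truncated path algebra with `r` loops and Loewy length `L+1`:
the quotient of `K⟨X_1,…,X_r⟩` by the two-sided ideal generated by all products
of `L+1` generators. -/
def TruncAlg (K : Type*) [Field K] (r L : ℕ) : Type _ := RingQuot (TruncRel K r L)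

instance (K : Type*) [Field K] (r L : ℕ) : Ring (TruncAlg K r L) :=
  inferInstanceAs (Ring (RingQuot _))

instance (K : Type*) [Field K] (r L : ℕ) : Algebra K (TruncAlg K r L) :=
  inferInstanceAs (Algebra K (RingQuot _))

/-- The images of the generators `X i` in the truncated algebra. -/
def gen (K : Type*) [Field K] (r L : ℕ) (i : Fin r) : TruncAlg K r L :=
  RingQuot.mkAlgHom K (TruncRel K r L) (FreeAlgebra.ι K i)

/-- The two-sided ideal `J` of `Λ` generated by the images of `X_1,…,X_r`,
realized as a `K`-submodule of `Λ`. -/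
def Jrad (K : Type*) [Field K] (r L : ℕ) : Submodule K (TruncAlg K r L) :=
  ⊤ * Submodule.span K (Set.range (gen K r L)) * ⊤

/-- `J^l M`, the submodule of `M` given by the action of `J^l`. -/
def jpow (K : Type*) [Field K] (r L : ℕ) (M : Type*) [AddCommGroup M] [Module K M]
    [Module (TruncAlg K r L) M] [IsScalarTower K (TruncAlg K r L) M] (l : ℕ) :
    Submodule (TruncAlg K r L) M :=
  Submodule.span (TruncAlg K r L)
    {x : M | ∃ a ∈ (Jrad K r L ^ l : Submodule K (TruncAlg K r L)), ∃ m : M, x = a • m}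

/-- The socle of a module: the supremum of all simple submodules. -/
def socle (R N : Type*) [Ring R] [AddCommGroup N] [Module R N] : Submodule R N :=
  sSup {p : Submodule R N | IsSimpleModule R ↥p}

/-- The socle series: `socSeries R M l` is `soc_{l-1} M`, so `socSeries R M 0 = soc_{-1} M = ⊥`
and `socSeries R M (l+1) = soc_l M` is the preimage in `M` of `soc (M / soc_{l-1} M)`. -/
def socSeries (R M : Type*) [Ring R] [AddCommGroup M] [Module R M] : ℕ → Submodule R M
  | 0 => ⊥
  | l + 1 => Submodule.comap (socSeries R M l).mkQ (socle R (M ⧸ socSeries R M l))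

/-- Dimension of the subquotient `q / (p ⊓ q)`; for `p ≤ q` this is `dim (q/p)`. -/
def quotDim (K M : Type*) [Field K] [AddCommGroup M] [Module K M]
    (p q : Submodule K M) : ℕ :=
  Module.finrank K (↥q ⧸ Submodule.comap q.subtype p)

/-- The radical layering `rad(M) = (dim_K J^l M / J^{l+1} M)_{l=0,…,L}`. -/
def radLayering (K : Type*) [Field K] (r L : ℕ) (M : Type*) [AddCommGroup M] [Module K M]
    [Module (TruncAlg K r L) M] [IsScalarTower K (TruncAlg K r L) M] : Fin (L + 1) → ℕ :=
  fun l => quotDim K M ((jpow K r L M ((l : ℕ) + 1)).restrictScalars K)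
    ((jpow K r L M (l : ℕ)).restrictScalars K)

/-- The socle layering `socseq(M) = (dim_K soc_l M / soc_{l-1} M)_{l=0,…,L}`. -/
def socLayering (K : Type*) [Field K] (r L : ℕ) (M : Type*) [AddCommGroup M] [Module K M]
    [Module (TruncAlg K r L) M] [IsScalarTower K (TruncAlg K r L) M] : Fin (L + 1) → ℕ :=
  fun l => quotDim K M ((socSeries (TruncAlg K r L) M (l : ℕ)).restrictScalars K)
    ((socSeries (TruncAlg K r L) M ((l : ℕ) + 1)).restrictScalars K)

/-- The dominance order on `ℕ^{L+1}`: `a ≼ b` iff all partial sums satisfy `≤`. -/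
def DomLE (L : ℕ) (a b : Fin (L + 1) → ℕ) : Prop :=
  ∀ l : Fin (L + 1), ∑ j ∈ Finset.Iic l, a j ≤ ∑ j ∈ Finset.Iic l, b j

/-- `reverse (a_0, …, a_L) = (a_L, …, a_0)`. -/
def revTuple (L : ℕ) (a : Fin (L + 1) → ℕ) : Fin (L + 1) → ℕ := fun l => a l.rev

/-- Given a `K`-algebra morphism `φ : Λ → End_K V` (a `Λ`-module structure on `V`),
the `K`-subspace `J^l V = {Σ φ(a_i)(m_i) | a_i ∈ J^l}`. -/
def phiLayer (K : Type*) [Field K] (r L : ℕ) (V : Type*) [AddCommGroup V] [Module K V]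
    (φ : TruncAlg K r L →ₐ[K] Module.End K V) (l : ℕ) : Submodule K V :=
  Submodule.span K
    {x : V | ∃ a ∈ (Jrad K r L ^ l : Submodule K (TruncAlg K r L)), ∃ m : V, x = φ a m}

/-- The radical layering of the `Λ`-module structure on `V` given by `φ`. -/
def phiRad (K : Type*) [Field K] (r L : ℕ) (V : Type*) [AddCommGroup V] [Module K V]
    (φ : TruncAlg K r L →ₐ[K] Module.End K V) : Fin (L + 1) → ℕ :=
  fun l => quotDim K V (phiLayer K r L V φ ((l : ℕ) + 1)) (phiLayer K r L V φ (l : ℕ))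

/-!
Let `S` be the span of the generators of `Λ`. Since `Λ = ∑ Sⁿ`, the subspace `S` commutes with `Λ`,
so `J = SΛ`, `Jⁿ = SⁿΛ` and `Jⁿ M = Eⁿ V`, where `E` is the span of `f₁, …, f_r` acting on
subspaces of `V`. The filtration `Wₙ = ⨁_{u ≥ n} V_u` satisfies `E Wₙ ≤ Wₙ₊₁`, so `Eⁿ V ≤ Wₙ`, and
comparing dimensions one layer at a time, the layers of `M` have the dimensions of
`V_0, …, V_m` iff `E W_l = W_{l+1}` for all `l ≤ m`.

As `W_l = V_l + W_{l+1}` and `E` is nilpotent, Nakayama's lemma turns `E W_l = W_{l+1}` into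
`W_{l+1} = ∑_{k ≥ 1} Eᵏ V_l`, which gives the criterion in terms of words in the `f_i`. When the
equalities are required for all `l` at once, downward induction on `l` replaces them by
`E V_l + W_{l+2} = W_{l+1}`, a statement about the dimension of the image of `E V_l` modulo
`W_{l+2}`.
-/

section SubmoduleAction

variable {R A M : Type*} [CommSemiring R] [Semiring A] [Algebra R A]
  [AddCommMonoid M] [Module R M] [Module A M] [IsScalarTower R A M]

theorem adjoin_toSubmodule_eq_iSup_pow (s : Set A) :
    Subalgebra.toSubmodule (Algebra.adjoin R s) = ⨆ n : ℕ, Submodule.span R s ^ n := by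
  refine le_antisymm ?_ (iSup_le fun n => ?_)
  · refine (Algebra.adjoin_toSubmodule_le R).2 fun a ha => ?_
    induction ha using Submonoid.closure_induction_left with
    | one => exact Submodule.mem_iSup_of_mem 0 (Submodule.one_le.1 (pow_zero _).ge)
    | mul_left x hx y _ hy =>
      have hxy := Submodule.mul_mem_mul (Submodule.subset_span (R := R) hx) hy
      rw [Submodule.mul_iSup] at hxy
      simp only [← pow_succ'] at hxy
      exact (iSup_le fun n => le_iSup (Submodule.span R s ^ ·) (n + 1) :
        ⨆ n : ℕ, Submodule.span R s ^ (n + 1) ≤ _) hxy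
  · induction n with
    | zero => exact Submodule.one_le.2 (one_mem (Algebra.adjoin R s))
    | succ n ih =>
      exact (mul_le_mul' ih (Algebra.span_le_adjoin R s)).trans
        (Subalgebra.isIdempotentElem_toSubmodule _).le

theorem commute_span_adjoin_toSubmodule (s : Set A) :
    Commute (Submodule.span R s) (Subalgebra.toSubmodule (Algebra.adjoin R s)) := by
  rw [adjoin_toSubmodule_eq_iSup_pow, commute_iff_eq, Submodule.mul_iSup, Submodule.iSup_mul]
  simp only [← pow_succ, ← pow_succ']

theorem pow_succ_smul (E : Submodule R A) (n : ℕ) (X : Submodule R M) :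
    E ^ (n + 1) • X = E • E ^ n • X := by
  rw [pow_succ']
  exact Submodule.smul_assoc E (E ^ n) X

theorem smul_top_of_one_le {E : Submodule R A} (h : 1 ≤ E) : E • (⊤ : Submodule R M) = ⊤ :=
  top_le_iff.1 <| (Submodule.one_smul (A := A) ⊤).ge.trans (Submodule.smul_mono_left h)

theorem le_iSup_pow_smul_of_le_sup_smul {E : Submodule R A} {X W : Submodule R M}
    (h : W ≤ X ⊔ E • W) {n : ℕ} (hn : E ^ n • W = ⊥) : W ≤ ⨆ k : ℕ, E ^ k • X := by
  set P : Submodule R M := ⨆ k : ℕ, E ^ k • X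
  have hXP : X ≤ P := le_iSup_of_le 0 (by rw [pow_zero, Submodule.one_smul])
  have hEP : E • P ≤ P := by
    simp only [P, Submodule.smul_iSup, ← pow_succ_smul]
    exact iSup_le fun k => le_iSup (fun k => E ^ k • X) (k + 1)
  have key (k : ℕ) : W ≤ P ⊔ E ^ k • W := by
    induction k with
    | zero => exact le_sup_of_le_right (by rw [pow_zero, Submodule.one_smul])
    | succ k ih =>
      calc
        W ≤ X ⊔ E • (P ⊔ E ^ k • W) := h.trans (sup_le_sup_left (smul_mono_right E ih) X)
        _ = X ⊔ E • P ⊔ E ^ (k + 1) • W := by rw [Submodule.smul_sup, pow_succ_smul, sup_assoc]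
        _ ≤ P ⊔ E ^ (k + 1) • W := sup_le_sup_right (sup_le hXP hEP) _
  simpa only [hn, sup_bot_eq] using key n

end SubmoduleAction

section Words

variable {R M ι : Type*} [CommSemiring R] [AddCommMonoid M] [Module R M]

theorem span_range_smul (f : ι → Module.End R M) (X : Submodule R M) :
    Submodule.span R (Set.range f) • X = ⨆ i, X.map (f i) := by
  refine le_antisymm (Submodule.smul_le.2 fun a ha x hx => ?_) (iSup_le fun i => ?_)
  · suffices h : Submodule.span R (Set.range f) ≤
        (⨆ i, X.map (f i)).comap (LinearMap.applyₗ (R := R) x) from h ha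
    rw [Submodule.span_le]
    rintro _ ⟨i, rfl⟩
    exact Submodule.mem_iSup_of_mem i (Submodule.mem_map_of_mem hx)
  · rintro _ ⟨x, hx, rfl⟩
    exact Submodule.smul_mem_smul (Submodule.subset_span ⟨i, rfl⟩) hx

theorem span_range_pow_smul (f : ι → Module.End R M) (X : Submodule R M) (n : ℕ) :
    Submodule.span R (Set.range f) ^ n • X =
      ⨆ (c : List ι) (_ : c.length = n), X.map (c.map f).prod := by
  induction n with
  | zero =>
    simp only [List.length_eq_zero_iff, iSup_iSup_eq_left, List.map_nil, List.prod_nil]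
    exact (Submodule.one_smul X).trans (Submodule.map_id X).symm
  | succ n ih =>
    rw [pow_succ_smul, ih, span_range_smul]
    simp only [Submodule.map_iSup, ← Submodule.map_comp]
    refine le_antisymm ?_ ?_
    · refine iSup_le fun i => iSup₂_le fun c hc => ?_
      exact le_iSup₂_of_le (i :: c) (congrArg (· + 1) hc) le_rfl
    · refine iSup₂_le fun c hc => ?_
      obtain ⟨i, c, rfl⟩ := List.exists_cons_of_length_eq_add_one hc
      exact le_iSup_of_le i (le_iSup₂_of_le c (Nat.succ_injective hc) le_rfl)

theorem iSup_span_range_pow_succ_smul (f : ι → Module.End R M) (X : Submodule R M) :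
    ⨆ n : ℕ, Submodule.span R (Set.range f) ^ (n + 1) • X =
      ⨆ (c : List ι) (_ : c ≠ []), X.map (c.map f).prod := by
  simp only [span_range_pow_smul]
  rw [iSup_comm]
  refine iSup_congr fun c => ?_
  cases c <;> simp

end Words

section Finrank

variable {K V : Type*} [Field K] [AddCommGroup V] [Module K V] [FiniteDimensional K V]

theorem finrank_map_mkQ_add_finrank (X W : Submodule K V) :
    Module.finrank K (X.map W.mkQ) + Module.finrank K W = Module.finrank K ↥(X ⊔ W) := by
  have h := LinearMap.finrank_range_add_finrank_ker (W.mkQ ∘ₗ (X ⊔ W).subtype)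
  rwa [LinearMap.range_comp, Submodule.range_subtype, Submodule.map_sup, Submodule.mkQ_map_self,
    sup_bot_eq, LinearMap.ker_comp, Submodule.ker_mkQ,
    (Submodule.comapSubtypeEquivOfLe le_sup_right).finrank_eq] at h

theorem quotDim_add_finrank {p q : Submodule K V} (h : p ≤ q) :
    quotDim K V p q + Module.finrank K p = Module.finrank K q := by
  rw [quotDim, ← (Submodule.comapSubtypeEquivOfLe h).finrank_eq,
    Submodule.finrank_quotient_add_finrank]

theorem forall_quotDim_eq_iff {F W : ℕ → Submodule K V} (hF : Antitone F) (hW : Antitone W)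
    (hle : F ≤ W) (h0 : F 0 = W 0) (m : ℕ) :
    (∀ n < m, quotDim K V (F (n + 1)) (F n) = quotDim K V (W (n + 1)) (W n)) ↔
      ∀ n ≤ m, F n = W n := by
  constructor
  · intro h n hn
    induction n with
    | zero => exact h0
    | succ n ih =>
      have hF' := quotDim_add_finrank (hF n.le_succ)
      have hW' := quotDim_add_finrank (hW n.le_succ)
      rw [h n hn, ih (by lia)] at hF'
      exact Submodule.eq_of_le_of_finrank_eq (hle _) (by lia)
  · intro h n hn
    rw [h n hn.le, h (n + 1) hn]

end Finrank

section TailSup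

/-- The join `⨆_{u ≥ n} V_u`: the `n`-th term of the descending filtration attached to a grading
`V_0, …, V_{N-1}`. It is indexed by all of `ℕ`, and is `⊥` for `n ≥ N`. -/
def tailSup {α : Type*} [CompleteLattice α] {N : ℕ} (V : Fin N → α) (n : ℕ) : α :=
  ⨆ (u : Fin N) (_ : n ≤ (u : ℕ)), V u

variable {α : Type*} [CompleteLattice α] {N : ℕ} (V : Fin N → α)

theorem le_tailSup {n : ℕ} {u : Fin N} (h : n ≤ u) : V u ≤ tailSup V n :=
  le_iSup₂_of_le u h le_rfl

theorem tailSup_antitone : Antitone (tailSup V) := fun _ _ h =>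
  iSup₂_le fun _ hu => le_tailSup V (h.trans hu)

theorem tailSup_zero : tailSup V 0 = ⨆ u, V u := by
  simp [tailSup]

theorem tailSup_eq_bot {n : ℕ} (h : N ≤ n) : tailSup V n = ⊥ :=
  le_bot_iff.1 <| iSup₂_le fun u hu => absurd (u.isLt.trans_le h) hu.not_gt

theorem tailSup_eq_sup (l : Fin N) : tailSup V l = V l ⊔ tailSup V (l + 1) := by
  refine le_antisymm (iSup₂_le fun u hu => ?_)
    (sup_le (le_tailSup V le_rfl) (tailSup_antitone V l.val.le_succ))
  rcases hu.eq_or_lt with h | h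
  · exact Fin.ext h ▸ le_sup_left
  · exact (le_tailSup V h).trans le_sup_right

theorem disjoint_tailSup_succ {V : Fin N → α} (hV : iSupIndep V) (l : Fin N) :
    Disjoint (V l) (tailSup V (l + 1)) :=
  (hV l).mono_right <| iSup₂_mono' fun u hu =>
    ⟨u, fun h => by subst h; lia, le_rfl⟩

end TailSup

section Filtration

variable {R A M : Type*} [CommSemiring R] [Semiring A] [Algebra R A]
  [AddCommMonoid M] [Module R M] [Module A M] [IsScalarTower R A M]
  {E : Submodule R A} {N : ℕ} {V : Fin N → Submodule R M}

theorem smul_tailSup_le (hE : ∀ l, E • V l ≤ tailSup V (l + 1)) (n : ℕ) :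
    E • tailSup V n ≤ tailSup V (n + 1) := by
  simp only [tailSup, Submodule.smul_iSup]
  exact iSup₂_le fun u hu => (hE u).trans (tailSup_antitone V (by lia))

theorem pow_smul_tailSup_le (hE : ∀ l, E • V l ≤ tailSup V (l + 1)) (n k : ℕ) :
    E ^ k • tailSup V n ≤ tailSup V (n + k) := by
  induction k with
  | zero => exact (Submodule.one_smul _).le
  | succ k ih =>
    rw [pow_succ_smul]
    exact (smul_mono_right E ih).trans (smul_tailSup_le hE (n + k))

theorem smul_tailSup_eq_iff_le_iSup_pow_smul (hE : ∀ l, E • V l ≤ tailSup V (l + 1)) (l : Fin N) :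
    E • tailSup V l = tailSup V (l + 1) ↔ tailSup V (l + 1) ≤ ⨆ n : ℕ, E ^ (n + 1) • V l := by
  simp only [pow_succ_smul, ← Submodule.smul_iSup]
  constructor
  · intro h
    have hnil : E ^ N • tailSup V l = ⊥ :=
      le_bot_iff.1 ((pow_smul_tailSup_le hE l N).trans (tailSup_eq_bot V (by lia)).le)
    have hgen : tailSup V l ≤ ⨆ n : ℕ, E ^ n • V l :=
      le_iSup_pow_smul_of_le_sup_smul (h ▸ (tailSup_eq_sup V l).le) hnil
    exact h ▸ smul_mono_right E hgen
  · intro h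
    have hstable (n : ℕ) : E ^ n • V l ≤ tailSup V l :=
      (smul_mono_right _ (le_tailSup V le_rfl)).trans
        ((pow_smul_tailSup_le hE l n).trans (tailSup_antitone V (by lia)))
    exact (smul_tailSup_le hE l).antisymm
      (h.trans (smul_mono_right E (iSup_le hstable)))

theorem forall_pow_smul_top_eq_tailSup_iff (htop : ⨆ u, V u = ⊤) (m : ℕ) :
    (∀ n ≤ m, E ^ n • (⊤ : Submodule R M) = tailSup V n) ↔
      ∀ n < m, E • tailSup V n = tailSup V (n + 1) := by
  constructor
  · intro h n hn
    rw [← h n hn.le, ← h (n + 1) hn, pow_succ_smul]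
  · intro h n hn
    induction n with
    | zero => rw [tailSup_zero, htop, pow_zero, Submodule.one_smul]
    | succ n ih => rw [pow_succ_smul, ih (by lia), h n hn]

theorem forall_smul_tailSup_eq_iff {L : ℕ} {V : Fin (L + 1) → Submodule R M}
    (hE : ∀ l, E • V l ≤ tailSup V (l + 1)) :
    (∀ n < L + 1, E • tailSup V n = tailSup V (n + 1)) ↔
      ∀ l : Fin L, E • V l.castSucc ⊔ tailSup V (l + 2) = tailSup V (l + 1) := by
  have hsplit (l : Fin L) :
      E • tailSup V l = E • V l.castSucc ⊔ E • tailSup V (l + 1) := by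
    rw [← Submodule.smul_sup]
    exact congrArg (E • ·) (tailSup_eq_sup V l.castSucc)
  constructor
  · intro h l
    have hanti : tailSup V (l + 2) ≤ tailSup V (l + 1) := tailSup_antitone V (Nat.le_succ _)
    refine le_antisymm (sup_le (hE l.castSucc) hanti) ?_
    rw [← h l (Nat.lt_succ_of_lt l.isLt), hsplit]
    exact sup_le_sup_left (smul_tailSup_le hE (l + 1)) _
  · intro h n hn
    replace hn : n ≤ L := Nat.le_of_lt_succ hn
    induction hn using Nat.decreasingInduction with
    | self =>
      rw [tailSup_eq_bot V le_rfl, ← le_bot_iff, ← tailSup_eq_bot V le_rfl]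
      exact smul_tailSup_le hE L
    | of_succ n hn ih =>
      rw [hsplit ⟨n, hn⟩, ih]
      exact h ⟨n, hn⟩

end Filtration

section FiltrationFinrank

variable {K V : Type*} [Field K] [AddCommGroup V] [Module K V] [FiniteDimensional K V] {N : ℕ}
  {Vsub : Fin N → Submodule K V}

theorem finrank_tailSup (hV : iSupIndep Vsub) (l : Fin N) :
    Module.finrank K ↥(tailSup Vsub l) =
      Module.finrank K (Vsub l) + Module.finrank K ↥(tailSup Vsub (l + 1)) := by
  have h := Submodule.finrank_sup_add_finrank_inf_eq (Vsub l) (tailSup Vsub (l + 1))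
  rwa [(disjoint_tailSup_succ hV l).eq_bot, finrank_bot, add_zero, ← tailSup_eq_sup] at h

theorem quotDim_tailSup (hV : iSupIndep Vsub) (l : Fin N) :
    quotDim K V (tailSup Vsub (l + 1)) (tailSup Vsub l) = Module.finrank K (Vsub l) := by
  have h := quotDim_add_finrank (tailSup_antitone Vsub (Nat.le_succ l))
  rw [finrank_tailSup hV l] at h
  exact Nat.add_right_cancel h

theorem finrank_map_mkQ_tailSup_eq_iff (hV : iSupIndep Vsub) (l : Fin N) {X : Submodule K V}
    (hX : X ≤ tailSup Vsub l) :
    Module.finrank K (X.map (tailSup Vsub (l + 1)).mkQ) = Module.finrank K (Vsub l) ↔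
      X ⊔ tailSup Vsub (l + 1) = tailSup Vsub l := by
  rw [← Nat.add_right_cancel_iff (n := Module.finrank K ↥(tailSup Vsub (l + 1))),
    finrank_map_mkQ_add_finrank, ← finrank_tailSup hV]
  exact ⟨Submodule.eq_of_le_of_finrank_eq (sup_le hX (tailSup_antitone Vsub (Nat.le_succ l))),
    fun h => by rw [h]⟩

theorem forall_quotDim_pow_smul_top_eq_iff {E : Submodule K (Module.End K V)}
    (hV : DirectSum.IsInternal Vsub) (hE : ∀ l, E • Vsub l ≤ tailSup Vsub (l + 1)) {m : ℕ}
    (hm : m ≤ N) :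
    (∀ (n : ℕ) (hn : n < m), quotDim K V (E ^ (n + 1) • ⊤) (E ^ n • ⊤) =
        Module.finrank K (Vsub ⟨n, hn.trans_le hm⟩)) ↔
      ∀ n < m, E • tailSup Vsub n = tailSup Vsub (n + 1) := by
  have htop : tailSup Vsub 0 = ⊤ := (tailSup_zero Vsub).trans hV.submodule_iSup_eq_top
  have hanti : Antitone fun n : ℕ => E ^ n • (⊤ : Submodule K V) :=
    antitone_nat_of_succ_le fun n => by
      rw [pow_succ]
      exact (Submodule.smul_assoc (E ^ n) E ⊤).le.trans (smul_mono_right _ le_top)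
  rw [← forall_pow_smul_top_eq_tailSup_iff hV.submodule_iSup_eq_top,
    ← forall_quotDim_eq_iff hanti (tailSup_antitone Vsub)
      (fun n => by simpa [htop] using pow_smul_tailSup_le hE 0 n)
      ((Submodule.one_smul _).trans htop.symm)]
  exact forall₂_congr fun n hn => by
    rw [← quotDim_tailSup hV.submodule_iSupIndep ⟨n, hn.trans_le hm⟩]

end FiltrationFinrank

section TruncAlg

variable {K : Type*} [Field K] {r L : ℕ}

theorem adjoin_range_gen : Algebra.adjoin K (Set.range (gen K r L)) = ⊤ := by
  have h := congrArg (Subalgebra.map (RingQuot.mkAlgHom K (TruncRel K r L)))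
    (FreeAlgebra.adjoin_range_ι K (Fin r))
  rw [AlgHom.map_adjoin, ← Set.range_comp, Algebra.map_top,
    (AlgHom.range_eq_top _).2 (RingQuot.mkAlgHom_surjective K _)] at h
  exact h

-- `Jrad ^ 0 = 1` consists of the scalars only, hence `⊤ ^ n` rather than `⊤`.
theorem Jrad_pow (n : ℕ) :
    Jrad K r L ^ n = Submodule.span K (Set.range (gen K r L)) ^ n * ⊤ ^ n := by
  have hcomm : Commute (Submodule.span K (Set.range (gen K r L))) ⊤ := by
    simpa only [adjoin_range_gen, Algebra.top_toSubmodule] using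
      commute_span_adjoin_toSubmodule (R := K) (Set.range (gen K r L))
  have htop : (⊤ * ⊤ : Submodule K (TruncAlg K r L)) = ⊤ := by
    simpa only [Algebra.top_toSubmodule] using
      (Subalgebra.isIdempotentElem_toSubmodule (⊤ : Subalgebra K (TruncAlg K r L))).eq
  rw [Jrad, ← hcomm.eq, mul_assoc, htop, hcomm.mul_pow]

variable {V : Type*} [AddCommGroup V] [Module K V] (φ : TruncAlg K r L →ₐ[K] Module.End K V)

theorem phiLayer_eq_map_smul_top (n : ℕ) :
    phiLayer K r L V φ n = (Jrad K r L ^ n).map φ.toLinearMap • ⊤ := by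
  refine le_antisymm (Submodule.span_le.2 ?_) (Submodule.smul_le.2 ?_)
  · rintro _ ⟨a, ha, x, rfl⟩
    exact Submodule.smul_mem_smul (Submodule.mem_map_of_mem ha) Submodule.mem_top
  · rintro _ ⟨a, ha, rfl⟩ x -
    exact Submodule.subset_span ⟨a, ha, x, rfl⟩

theorem phiLayer_eq_pow_smul_top (n : ℕ) :
    phiLayer K r L V φ n =
      Submodule.span K (Set.range fun i => φ (gen K r L i)) ^ n • ⊤ := by
  have hone : 1 ≤ (⊤ ^ n : Submodule K (TruncAlg K r L)).map φ.toLinearMap := by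
    rw [← Submodule.map_one φ]
    exact Submodule.map_mono (one_le_pow₀ le_top)
  have hspan : (Submodule.span K (Set.range (gen K r L))).map φ.toLinearMap =
      Submodule.span K (Set.range fun i => φ (gen K r L i)) := by
    rw [Submodule.map_span, ← Set.range_comp]
    rfl
  rw [phiLayer_eq_map_smul_top, Jrad_pow, Submodule.map_mul, Submodule.map_pow, hspan]
  exact (Submodule.smul_assoc _ _ _).trans (congrArg _ (smul_top_of_one_le hone))

theorem forall_phiRad_eq_iff [FiniteDimensional K V] {Vsub : Fin (L + 1) → Submodule K V}
    (hV : DirectSum.IsInternal Vsub)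
    (hE : ∀ l, Submodule.span K (Set.range fun i => φ (gen K r L i)) • Vsub l ≤
      tailSup Vsub (l + 1)) (m : Fin (L + 1)) :
    (∀ l ≤ m, phiRad K r L V φ l = Module.finrank K (Vsub l)) ↔
      ∀ n < (m : ℕ) + 1, Submodule.span K (Set.range fun i => φ (gen K r L i)) •
        tailSup Vsub n = tailSup Vsub (n + 1) := by
  rw [← forall_quotDim_pow_smul_top_eq_iff hV hE m.isLt]
  simp only [phiRad, phiLayer_eq_pow_smul_top]
  exact ⟨fun h n hn => h ⟨n, hn.trans_le m.isLt⟩ (Nat.le_of_lt_succ hn),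
    fun h l hl => h l (Nat.lt_succ_of_le hl)⟩

end TruncAlg

theorem stmt15_general (K : Type*) [Field K] (r L : ℕ)
    (V : Type*) [AddCommGroup V] [Module K V] [FiniteDimensional K V]
    (Vsub : Fin (L + 1) → Submodule K V) (hdec : DirectSum.IsInternal Vsub)
    (f : Fin r → Module.End K V)
    (hf : ∀ (i : Fin r) (l : Fin (L + 1)),
      (Vsub l).map (f i) ≤ ⨆ (u : Fin (L + 1)) (_ : l < u), Vsub u)
    (φ : TruncAlg K r L →ₐ[K] Module.End K V) (hφ : ∀ i, φ (gen K r L i) = f i) :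
    (∀ m : Fin (L + 1),
      ((∀ l : Fin (L + 1), l ≤ m → phiRad K r L V φ l = Module.finrank K ↥(Vsub l)) ↔
        (∀ l : Fin (L + 1), l ≤ m →
          (⨆ (u : Fin (L + 1)) (_ : l < u), Vsub u) ≤
            ⨆ (c : List (Fin r)) (_ : c ≠ []), (Vsub l).map (c.map f).prod))) ∧
    ((phiRad K r L V φ = fun l => Module.finrank K ↥(Vsub l)) ↔
      (∀ l : Fin L,
        Module.finrank K
            ↥((⨆ i : Fin r, (Vsub l.castSucc).map (f i)).map
              (Submodule.mkQ
                (⨆ (u : Fin (L + 1)) (_ : (l : ℕ) + 2 ≤ (u : ℕ)), Vsub u)))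
          = Module.finrank K ↥(Vsub l.succ))) := by
  obtain rfl : (fun i => φ (gen K r L i)) = f := funext hφ
  have hE (l : Fin (L + 1)) :
      Submodule.span K (Set.range fun i => φ (gen K r L i)) • Vsub l ≤ tailSup Vsub (l + 1) := by
    rw [span_range_smul]
    exact iSup_le fun i => hf i l
  refine ⟨fun m => (forall_phiRad_eq_iff φ hdec hE m).trans ?_, ?_⟩
  · have hword (l : Fin (L + 1)) := smul_tailSup_eq_iff_le_iSup_pow_smul hE l
    simp only [iSup_span_range_pow_succ_smul] at hword
    exact ⟨fun h l hl => (hword l).1 (h l (Nat.lt_succ_of_le hl)),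
      fun h n hn => (hword ⟨n, hn.trans_le m.isLt⟩).2 (h _ (Nat.le_of_lt_succ hn))⟩
  · have hall := forall_phiRad_eq_iff φ hdec hE (Fin.last L)
    simp only [Fin.le_last, forall_true_left, Fin.val_last] at hall
    rw [funext_iff, hall, forall_smul_tailSup_eq_iff hE]
    refine forall_congr' fun l => ?_
    rw [← span_range_smul]
    exact (finrank_map_mkQ_tailSup_eq_iff hdec.submodule_iSupIndep l.succ (hE l.castSucc)).symm

/-- Let `V = ⊕_{l=0}^L V_l`, `f_1,…,f_r` endomorphisms with
`f_i(V_l) ⊆ ⊕_{u>l} V_u`, and `M` the resulting `Λ`-module structure (given by `φ`).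
Then for every `m ≤ L`: `dim(J^l M/J^{l+1} M) = dim V_l` for all `l ≤ m` iff for every
`l ≤ m` the sum of the images of `V_l` under all nonempty compositions of the `f_i`
contains `⊕_{u>l} V_u`.  In particular `rad(M) = (dim V_0,…,dim V_L)` iff for every
`0 ≤ l < L` the image of `∑_i f_i(V_l)` in `V/(⊕_{u≥l+2} V_u)` has dimension
`dim V_{l+1}`. -/
theorem stmt15 (K : Type) [Field K] [IsAlgClosed K] (r L : ℕ) (hr : 0 < r) (hL : 0 < L)
    (V : Type) [AddCommGroup V] [Module K V] [FiniteDimensional K V]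
    (Vsub : Fin (L + 1) → Submodule K V) (hdec : DirectSum.IsInternal Vsub)
    (f : Fin r → Module.End K V)
    (hf : ∀ (i : Fin r) (l : Fin (L + 1)),
      (Vsub l).map (f i) ≤ ⨆ (u : Fin (L + 1)) (_ : l < u), Vsub u)
    (φ : TruncAlg K r L →ₐ[K] Module.End K V) (hφ : ∀ i, φ (gen K r L i) = f i) :
    (∀ m : Fin (L + 1),
      ((∀ l : Fin (L + 1), l ≤ m → phiRad K r L V φ l = Module.finrank K ↥(Vsub l)) ↔
        (∀ l : Fin (L + 1), l ≤ m →
          (⨆ (u : Fin (L + 1)) (_ : l < u), Vsub u) ≤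
            ⨆ (c : List (Fin r)) (_ : c ≠ []), (Vsub l).map (c.map f).prod))) ∧
    ((phiRad K r L V φ = fun l => Module.finrank K ↥(Vsub l)) ↔
      (∀ l : Fin L,
        Module.finrank K
            ↥((⨆ i : Fin r, (Vsub l.castSucc).map (f i)).map
              (Submodule.mkQ
                (⨆ (u : Fin (L + 1)) (_ : (l : ℕ) + 2 ≤ (u : ℕ)), Vsub u)))
          = Module.finrank K ↥(Vsub l.succ))) := by
  exact stmt15_general K r L V Vsub hdec f hf φ hφ
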